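/- Let A be an admissible set of addition chains and k ≥ 1 an integer. Then the set {δ^A(n) : n a positive integer with ν₂(n) = k} is a well-ordered subset of the real numbers with order type at least ω^(k−1) and at most ω^(k−1)·k (in particular, less than ω^k). The same holds for the set {δ^A_st(n) : n a positive integer with ν₂(n) = k}. -/

import Mathlib

/-- `c` is an addition chain: a nonempty list of positive integers starting at `1`
such that every later entry is the sum of two (not necessarily distinct) earlier entries. -/
def IsAdditionChain (c : List ℕ) : Prop :=
  c.getD 0 0 = 1 ∧
    ∀ k, 0 < k → k < c.length →
      ∃ i j, i < k ∧ j < k ∧ c.getD k 0 = c.getD i 0 + c.getD j 0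

/-- `c` is an addition chain whose last entry is `n`; its length is `c.length - 1`. -/
def IsAdditionChainFor (c : List ℕ) (n : ℕ) : Prop :=
  IsAdditionChain c ∧ c.getD (c.length - 1) 0 = n

/-- ν₂(n): the number of 1's in the binary expansion of `n`. -/
def binaryWeight (n : ℕ) : ℕ := (Nat.digits 2 n).sum

/-- `ℓ^A(n)`: the least length (number of steps, i.e. one less than the number of
entries) of an addition chain for `n` belonging to the set `A` of addition chains. -/
noncomputable def chainLength (A : Set (List ℕ)) (n : ℕ) : ℕ :=
  sInf {r | ∃ c ∈ A, IsAdditionChainFor c n ∧ c.length = r + 1}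

/-- A set `A` of addition chains is admissible if (i) every positive `n` has a chain
in `A` of length at most `⌊log₂ n⌋ + ν₂(n) - 1` (i.e. with at most
`⌊log₂ n⌋ + ν₂(n)` entries) and (ii) `ℓ^A(2n) ≤ ℓ^A(n) + 1` for all positive `n`. -/
def Admissible (A : Set (List ℕ)) : Prop :=
  (∀ n : ℕ, 0 < n → ∃ c ∈ A, IsAdditionChainFor c n ∧
      c.length ≤ Nat.log 2 n + binaryWeight n) ∧
  ∀ n : ℕ, 0 < n → chainLength A (2 * n) ≤ chainLength A n + 1

/-- The A-defect `δ^A(n) = ℓ^A(n) - log₂ n`. -/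
noncomputable def Adefect (A : Set (List ℕ)) (n : ℕ) : ℝ :=
  (chainLength A n : ℝ) - Real.logb 2 n

/-- `m` is A-stable if `ℓ^A(2^k m) = ℓ^A(m) + k` for all `k ≥ 0`. -/
def AStable (A : Set (List ℕ)) (m : ℕ) : Prop :=
  ∀ k : ℕ, chainLength A (2 ^ k * m) = chainLength A m + k

/-- `𝒟^A`: the set of all A-defect values. -/
def defectSet (A : Set (List ℕ)) : Set ℝ :=
  {d | ∃ n : ℕ, 0 < n ∧ d = Adefect A n}

/-- `𝒟^A_st`: the set of all A-stable defects. -/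
def stableDefectSet (A : Set (List ℕ)) : Set ℝ :=
  {d | ∃ n : ℕ, 0 < n ∧ AStable A n ∧ d = Adefect A n}

open scoped Classical in
/-- The order type of a well-ordered subset `S` of a linear order
(junk value `0` if `S` is not well-ordered, i.e. not `Set.IsWF`). -/
noncomputable def setOrderType {X : Type*} [LinearOrder X] (S : Set X) : Ordinal :=
  if h : S.IsWF then
    letI : WellFoundedLT S := ⟨h⟩
    Ordinal.type ((· < ·) : S → S → Prop)
  else 0

/-! ### Chain lengths -/

lemma IsAdditionChain.getD_le {c : List ℕ} (hc : IsAdditionChain c) (k : ℕ)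
    (hk : k < c.length) : c.getD k 0 ≤ 2 ^ k := by
  induction k using Nat.strong_induction_on with
  | _ k ih =>
    rcases Nat.eq_zero_or_pos k with rfl | hpos
    · rw [hc.1]; simp
    · obtain ⟨i, j, hi, hj, he⟩ := hc.2 k hpos hk
      have h1 := ih i hi (by omega)
      have h2 := ih j hj (by omega)
      have h3 : 2 ^ i ≤ 2 ^ (k - 1) := Nat.pow_le_pow_right (by norm_num) (by omega)
      have h4 : 2 ^ j ≤ 2 ^ (k - 1) := Nat.pow_le_pow_right (by norm_num) (by omega)
      have h5 : 2 ^ k = 2 * 2 ^ (k - 1) := by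
        rw [← pow_succ']; congr 1; omega
      omega

lemma IsAdditionChain.length_pos {c : List ℕ} (hc : IsAdditionChain c) : 0 < c.length := by
  rcases c with _ | ⟨a, c⟩
  · have := hc.1
    simp at this
  · simp

lemma chainLength_le {A : Set (List ℕ)} (hA : Admissible A) {n : ℕ} (hn : 0 < n) :
    chainLength A n + 1 ≤ Nat.log 2 n + binaryWeight n := by
  obtain ⟨c, hcA, hc, hl⟩ := hA.1 n hn
  have hp := hc.1.length_pos
  have : chainLength A n ≤ c.length - 1 := Nat.sInf_le ⟨c, hcA, hc, by omega⟩
  omega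

lemma log_le_chainLength {A : Set (List ℕ)} (hA : Admissible A) {n : ℕ} (hn : 0 < n) :
    Nat.log 2 n ≤ chainLength A n := by
  have hne : {r | ∃ c ∈ A, IsAdditionChainFor c n ∧ c.length = r + 1}.Nonempty := by
    obtain ⟨c, hcA, hc, hl⟩ := hA.1 n hn
    have hp := hc.1.length_pos
    exact ⟨c.length - 1, c, hcA, hc, by omega⟩
  obtain ⟨c, hcA, hc, hl⟩ := Nat.sInf_mem hne
  change c.length = chainLength A n + 1 at hl
  have h1 := hc.1.getD_le (c.length - 1) (by omega)
  rw [hc.2, hl, Nat.add_sub_cancel] at h1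
  calc Nat.log 2 n ≤ Nat.log 2 (2 ^ chainLength A n) := Nat.log_mono_right h1
    _ = _ := Nat.log_pow (by norm_num) _

/-! ### Binary weight -/

lemma binaryWeight_zero : binaryWeight 0 = 0 := by simp [binaryWeight]

lemma binaryWeight_two_mul_add (n r : ℕ) (hr : r < 2) :
    binaryWeight (2 * n + r) = binaryWeight n + r := by
  rcases Nat.eq_zero_or_pos (2 * n + r) with h | h
  · have h1 : n = 0 := by omega
    have h2 : r = 0 := by omega
    subst h1; subst h2; simp [binaryWeight]
  · unfold binaryWeight
    rw [Nat.digits_def' (by norm_num) h]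
    have h1 : (2 * n + r) % 2 = r := by omega
    have h2 : (2 * n + r) / 2 = n := by omega
    rw [h1, h2, List.sum_cons, add_comm]

lemma binaryWeight_pow_mul (j n : ℕ) : binaryWeight (2 ^ j * n) = binaryWeight n := by
  induction j with
  | zero => simp
  | succ j ih =>
    have := binaryWeight_two_mul_add (2 ^ j * n) 0 (by norm_num)
    rw [← ih, pow_succ']
    simpa [mul_assoc] using this

lemma binaryWeight_two_pow_add (a n : ℕ) (hn : n < 2 ^ a) :
    binaryWeight (2 ^ a + n) = binaryWeight n + 1 := by
  induction a generalizing n with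
  | zero =>
    have : n = 0 := by simpa using hn
    subst this
    simp [binaryWeight]
  | succ a ih =>
    have hr : n % 2 < 2 := Nat.mod_lt _ (by norm_num)
    have hq : n / 2 < 2 ^ a := by rw [pow_succ] at hn; omega
    have e1 : 2 ^ (a + 1) + n = 2 * (2 ^ a + n / 2) + n % 2 := by rw [pow_succ]; omega
    have e2 : binaryWeight n = binaryWeight (n / 2) + n % 2 := by
      rw [← binaryWeight_two_mul_add _ _ hr]; congr 1; omega
    rw [e1, binaryWeight_two_mul_add _ _ hr, ih _ hq, e2]
    omega

/-- Sums `2^{-b₁} + ⋯ + 2^{-b_m}` with `c < b₁ < ⋯ < b_m`. -/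
def fracSums : ℕ → ℕ → Set ℝ
  | 0, _ => {0}
  | m + 1, c => {w | ∃ b : ℕ, c < b ∧ ∃ w' ∈ fracSums m b, w = (1 / 2 : ℝ) ^ b + w'}

lemma fracSums_bound (m c : ℕ) (w : ℝ) (hw : w ∈ fracSums m c) :
    0 ≤ w ∧ w < (1 / 2 : ℝ) ^ c := by
  induction m generalizing c w with
  | zero =>
    have : w = 0 := hw
    subst this
    exact ⟨le_rfl, by positivity⟩
  | succ m ih =>
    obtain ⟨b, hb, w', hw', rfl⟩ := hw
    obtain ⟨h1, h2⟩ := ih b w' hw'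
    refine ⟨by positivity, ?_⟩
    have h3 : (1 / 2 : ℝ) ^ b ≤ (1 / 2 : ℝ) ^ (c + 1) :=
      pow_le_pow_of_le_one (by norm_num) (by norm_num) hb
    rw [pow_succ] at h3
    linarith

lemma half_pow_eq (b : ℕ) : (1 / 2 : ℝ) ^ b = 1 / 2 ^ b := by
  rw [div_pow, one_pow]

lemma exists_two_pow_add {n : ℕ} (hn : 0 < n) :
    ∃ a n', n = 2 ^ a + n' ∧ n' < 2 ^ a := by
  refine ⟨Nat.log 2 n, n - 2 ^ Nat.log 2 n, ?_, ?_⟩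
  · have := Nat.pow_log_le_self 2 hn.ne'
    omega
  · have := Nat.lt_pow_succ_log_self (b := 2) (by norm_num) n
    rw [Nat.pow_succ] at this
    have := Nat.pow_log_le_self 2 hn.ne'
    omega

lemma mem_fracSums_of_lt (m c e n : ℕ) (hn : n < 2 ^ e) (hw : binaryWeight n = m) :
    (n : ℝ) / 2 ^ (e + c) ∈ fracSums m c := by
  induction m generalizing n c e with
  | zero =>
    rcases Nat.eq_zero_or_pos n with rfl | hpos
    · simp [fracSums]
    · obtain ⟨a, n', rfl, hn'⟩ := exists_two_pow_add hpos
      rw [binaryWeight_two_pow_add _ _ hn'] at hw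
      omega
  | succ m ih =>
    rcases Nat.eq_zero_or_pos n with rfl | hpos
    · rw [binaryWeight_zero] at hw; omega
    · obtain ⟨a, n', rfl, hn'⟩ := exists_two_pow_add hpos
      rw [binaryWeight_two_pow_add _ _ hn'] at hw
      have hae : a < e := by
        rw [← Nat.pow_lt_pow_iff_right (a := 2) (by norm_num)]
        omega
      obtain ⟨b, hb⟩ : ∃ b, e + c = a + b := ⟨e + c - a, by omega⟩
      refine ⟨b, by omega, _, ih b a n' hn' (by omega), ?_⟩
      rw [hb, half_pow_eq]
      push_cast
      rw [pow_add]
      field_simp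

lemma exists_of_mem_fracSums (m c : ℕ) (w : ℝ) (hw : w ∈ fracSums m c) :
    ∃ e n : ℕ, n < 2 ^ e ∧ binaryWeight n = m ∧ w = (n : ℝ) / 2 ^ (e + c) := by
  induction m generalizing c w with
  | zero =>
    have : w = 0 := hw
    subst this
    exact ⟨0, 0, by simp, binaryWeight_zero, by simp⟩
  | succ m ih =>
    obtain ⟨b, hb, w', hw', rfl⟩ := hw
    obtain ⟨e, n, hn, hwt, rfl⟩ := ih b w' hw'
    refine ⟨e + b - c, 2 ^ e + n, ?_, ?_, ?_⟩
    · have : 2 ^ (e + 1) ≤ 2 ^ (e + b - c) := Nat.pow_le_pow_right (by norm_num) (by omega)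
      rw [pow_succ] at this
      omega
    · rw [binaryWeight_two_pow_add _ _ hn, hwt]
    · have : e + b - c + c = e + b := by omega
      rw [this, half_pow_eq]
      push_cast
      rw [pow_add]
      field_simp

lemma Adefect_form {A : Set (List ℕ)} (hA : Admissible A) {m N a : ℕ} {w : ℝ}
    (hwt : binaryWeight N = m + 1) (hw0 : 0 ≤ w) (hw1 : w < 1)
    (hN : (N : ℝ) = 2 ^ a * (1 + w)) :
    ∃ s : ℕ, s < m + 1 ∧ Adefect A N = -Real.logb 2 (1 + w) + s := by
  have h2a : (0 : ℝ) < 2 ^ a := by positivity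
  have hpos : 0 < N := by
    have : (0 : ℝ) < N := by rw [hN]; positivity
    exact_mod_cast this
  have hlog : Nat.log 2 N = a := by
    rw [Nat.log_eq_iff (Or.inr ⟨by norm_num, hpos.ne'⟩)]
    constructor
    · have : (2 : ℝ) ^ a ≤ N := by rw [hN]; nlinarith
      exact_mod_cast this
    · have : (N : ℝ) < 2 ^ (a + 1) := by rw [hN, pow_succ]; nlinarith
      exact_mod_cast this
  have h1 := chainLength_le hA hpos
  have h2 := log_le_chainLength hA hpos
  rw [hlog] at h1 h2
  obtain ⟨s, hs⟩ := Nat.exists_eq_add_of_le h2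
  refine ⟨s, by omega, ?_⟩
  unfold Adefect
  rw [hs, hN, Real.logb_mul h2a.ne' (by positivity), Real.logb_pow,
    Real.logb_self_eq_one (by norm_num)]
  push_cast
  ring

lemma exists_stable {A : Set (List ℕ)} (hA : Admissible A) {n : ℕ} (hn : 0 < n) :
    ∃ j, AStable A (2 ^ j * n) := by
  have hle : ∀ j, j ≤ chainLength A (2 ^ j * n) := by
    intro j
    refine le_trans ?_ (log_le_chainLength hA (by positivity))
    apply Nat.le_log_of_pow_le (by norm_num)
    nlinarith [Nat.two_pow_pos j]
  have hstep : ∀ j i, chainLength A (2 ^ i * (2 ^ j * n)) ≤ chainLength A (2 ^ j * n) + i := by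
    intro j i
    induction i with
    | zero => simp
    | succ i ih =>
      have := hA.2 (2 ^ i * (2 ^ j * n)) (by positivity)
      rw [pow_succ', mul_assoc]
      omega
  let g : ℕ → ℕ := fun j => chainLength A (2 ^ j * n) - j
  obtain ⟨j, hj⟩ : ∃ j, ∀ j', g j ≤ g j' := by
    obtain ⟨j, hj⟩ := Nat.sInf_mem (Set.range_nonempty g)
    exact ⟨j, fun j' => hj.le.trans (Nat.sInf_le ⟨j', rfl⟩)⟩
  refine ⟨j, fun i => le_antisymm (hstep j i) ?_⟩
  have h1 := hj (i + j)
  simp only [g] at h1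
  rw [pow_add, mul_assoc] at h1
  have h2 := hle j
  have h3 := hle (i + j)
  rw [pow_add, mul_assoc] at h3
  omega

/-! ### Order types -/

lemma setOrderType_of_map (S : Set ℝ) (o : Ordinal.{0}) (g : S → Ordinal.{0})
    (hg : ∀ x y : S, x < y → g x < g y) (ho : ∀ x, g x < o) :
    S.IsWF ∧ setOrderType S ≤ o := by
  have hwf : S.IsWF := by
    change WellFounded _
    refine Subrelation.wf ?_ (InvImage.wf g Ordinal.lt_wf)
    intro x y h
    exact hg x y h
  refine ⟨hwf, ?_⟩
  unfold setOrderType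
  rw [dif_pos hwf]
  have : WellFoundedLT S := ⟨hwf⟩
  rw [← Ordinal.type_toType o]
  have hmono : StrictMono g := fun x y h => hg x y h
  let f : S → o.ToType := fun x => Ordinal.ToType.mk ⟨g x, ho x⟩
  have hf : StrictMono f := by
    intro x y h
    exact (OrderIso.lt_iff_lt _).2 (hmono h)
  exact Ordinal.type_le_iff'.2 ⟨(OrderEmbedding.ofStrictMono f hf).ltEmbedding⟩

lemma setOrderType_mono {S T : Set ℝ} (hT : T.IsWF) (h : S ⊆ T) :
    setOrderType S ≤ setOrderType T := by
  have hS : S.IsWF := hT.mono h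
  unfold setOrderType
  rw [dif_pos hS, dif_pos hT]
  have : WellFoundedLT S := ⟨hS⟩
  have : WellFoundedLT T := ⟨hT⟩
  exact Ordinal.type_le_iff'.2 ⟨⟨⟨Set.inclusion h, Set.inclusion_injective h⟩, Iff.rfl⟩⟩

lemma setOrderType_add_le {S A B : Set ℝ} (hS : S.IsWF) (hA : A ⊆ S) (hB : B ⊆ S)
    (h : ∀ a ∈ A, ∀ b ∈ B, a < b) :
    setOrderType A + setOrderType B ≤ setOrderType S := by
  unfold setOrderType
  rw [dif_pos hS, dif_pos (hS.mono hA), dif_pos (hS.mono hB)]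
  have : WellFoundedLT S := ⟨hS⟩
  have : WellFoundedLT A := ⟨hS.mono hA⟩
  have : WellFoundedLT B := ⟨hS.mono hB⟩
  rw [← Ordinal.type_sum_lex]
  refine Ordinal.type_le_iff'.2 ⟨RelEmbedding.ofMonotone
    (Sum.elim (Set.inclusion hA) (Set.inclusion hB)) ?_⟩
  rintro (a | a) (b | b) hab
  · simpa using hab
  · exact h a a.2 b b.2
  · simp at hab
  · simpa using hab

lemma one_le_setOrderType {S : Set ℝ} (hS : S.IsWF) (hne : S.Nonempty) :
    1 ≤ setOrderType S := by
  unfold setOrderType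
  rw [dif_pos hS]
  have : WellFoundedLT S := ⟨hS⟩
  have : Nonempty S := hne.to_subtype
  rw [Order.one_le_iff_pos, pos_iff_ne_zero]
  exact Ordinal.type_ne_zero_of_nonempty _

/-- A partition-regular notion of containing a copy of `ω^m`. -/
def BigSet : ℕ → Set ℝ → Prop
  | 0, T => T.Nonempty
  | m + 1, T => ∃ x : ℕ → ℝ, Monotone x ∧
      ∃ᶠ i in Filter.atTop, BigSet m (T ∩ Set.Ioc (x i) (x (i + 1)))

lemma BigSet.mono {m : ℕ} {S T : Set ℝ} (hS : BigSet m S) (h : S ⊆ T) : BigSet m T := by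
  induction m generalizing S T with
  | zero => exact Set.Nonempty.mono h hS
  | succ m ih =>
    obtain ⟨x, hx, hf⟩ := hS
    exact ⟨x, hx, hf.mono fun i hi => ih hi (Set.inter_subset_inter_left _ h)⟩

lemma BigSet.union {m : ℕ} {S T : Set ℝ} (h : BigSet m (S ∪ T)) : BigSet m S ∨ BigSet m T := by
  induction m generalizing S T with
  | zero => exact Set.union_nonempty.1 h
  | succ m ih =>
    obtain ⟨x, hx, hf⟩ := h
    have : ∃ᶠ i in Filter.atTop, BigSet m (S ∩ Set.Ioc (x i) (x (i + 1))) ∨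
        BigSet m (T ∩ Set.Ioc (x i) (x (i + 1))) :=
      hf.mono fun i hi => by
        rw [Set.union_inter_distrib_right] at hi
        exact ih hi
    rw [Filter.frequently_or_distrib] at this
    exact this.imp (fun h => ⟨x, hx, h⟩) (fun h => ⟨x, hx, h⟩)

lemma not_bigSet_empty (m : ℕ) : ¬ BigSet m ∅ := by
  induction m with
  | zero => exact Set.not_nonempty_empty
  | succ m ih =>
    rintro ⟨x, hx, hf⟩
    obtain ⟨i, hi⟩ := hf.exists
    rw [Set.empty_inter] at hi
    exact ih hi

lemma BigSet.exists_piece {m k : ℕ} {T : Set ℝ} {P : ℕ → Set ℝ} (h : BigSet m T)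
    (hP : ∀ t ∈ T, ∃ s < k, t ∈ P s) : ∃ s < k, BigSet m (P s) := by
  induction k generalizing T with
  | zero =>
    have : T = ∅ := by
      ext t
      simp only [Set.mem_empty_iff_false, iff_false]
      intro ht
      obtain ⟨s, hs, _⟩ := hP t ht
      omega
    rw [this] at h
    exact absurd h (not_bigSet_empty m)
  | succ k ih =>
    have h1 : BigSet m ({t ∈ T | ∃ s < k, t ∈ P s} ∪ P k) := h.mono (by
      intro t ht
      obtain ⟨s, hs, hts⟩ := hP t ht
      rcases Nat.lt_succ_iff_lt_or_eq.1 hs with h | rfl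
      · exact Or.inl ⟨ht, s, h, hts⟩
      · exact Or.inr hts)
    rcases h1.union with h | h
    · obtain ⟨s, hs, hb⟩ := ih h (fun t ht => ht.2)
      exact ⟨s, by omega, hb⟩
    · exact ⟨k, by omega, h⟩

lemma BigSet.translate {m : ℕ} {D : Set ℝ} (s : ℝ) (h : BigSet m {t | t + s ∈ D}) :
    BigSet m D := by
  induction m generalizing D with
  | zero =>
    obtain ⟨t, ht⟩ := h
    exact ⟨_, ht⟩
  | succ m ih =>
    obtain ⟨x, hx, hf⟩ := h
    refine ⟨fun i => x i + s, fun i j hij => by simpa using hx hij, hf.mono fun i hi => ih ?_⟩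
    refine hi.mono ?_
    rintro t ⟨ht, h1, h2⟩
    exact ⟨ht, by simpa using h1, by simpa using h2⟩

lemma BigSet.le_setOrderType {m : ℕ} {T : Set ℝ} (hT : T.IsWF) (h : BigSet m T) :
    Ordinal.omega0 ^ (m : Ordinal.{0}) ≤ setOrderType T := by
  induction m generalizing T with
  | zero => simpa using one_le_setOrderType hT h
  | succ m ih =>
    obtain ⟨x, hx, hf⟩ := h
    have key : ∀ n : ℕ, ∃ i, Ordinal.omega0 ^ (m : Ordinal.{0}) * n ≤
        setOrderType (T ∩ Set.Iic (x i)) := by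
      intro n
      induction n with
      | zero => exact ⟨0, by simp⟩
      | succ n ihn =>
        obtain ⟨i, hi⟩ := ihn
        obtain ⟨j, hij, hj⟩ := (Filter.frequently_atTop.1 hf) i
        refine ⟨j + 1, ?_⟩
        have h1 := ih (hT.mono Set.inter_subset_left) hj
        rw [Nat.cast_succ, mul_add, mul_one]
        refine le_trans (add_le_add hi h1) ?_
        refine setOrderType_add_le (hT.mono Set.inter_subset_left) ?_ ?_ ?_
        · rintro t ⟨ht, h2⟩
          exact ⟨ht, le_trans h2 (hx (by omega))⟩
        · rintro t ⟨ht, h2, h3⟩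
          exact ⟨ht, h3⟩
        · rintro a ⟨_, h2⟩ b ⟨_, h3, _⟩
          exact lt_of_le_of_lt (le_trans h2 (hx hij)) h3
    rw [Nat.cast_succ, Ordinal.opow_add, Ordinal.opow_one,
      Ordinal.mul_le_iff_of_isSuccLimit Ordinal.isSuccLimit_omega0]
    intro o ho
    obtain ⟨n, rfl⟩ := Ordinal.lt_omega0.1 ho
    obtain ⟨i, hi⟩ := key n
    exact hi.trans (setOrderType_mono hT Set.inter_subset_left)

lemma bigSet_log_fracSums (m c : ℕ) (p : ℝ) (hp : 0 < p) :
    BigSet m {t | ∃ w ∈ fracSums m c, t = -Real.logb 2 (p + w)} := by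
  induction m generalizing c p with
  | zero => exact ⟨_, 0, rfl, rfl⟩
  | succ m ih =>
    refine ⟨fun i => -Real.logb 2 (p + (1 / 2) ^ i), ?_, ?_⟩
    · intro i j hij
      have : (1 / 2 : ℝ) ^ j ≤ (1 / 2 : ℝ) ^ i :=
        pow_le_pow_of_le_one (by norm_num) (by norm_num) hij
      apply neg_le_neg
      exact Real.logb_le_logb_of_le (by norm_num) (by positivity) (by linarith)
    · apply Filter.Eventually.frequently
      filter_upwards [Filter.eventually_ge_atTop c] with i hi
      refine (ih (i + 1) (p + (1 / 2) ^ (i + 1)) (by positivity)).mono ?_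
      rintro t ⟨w, hw, rfl⟩
      obtain ⟨h0, h1⟩ := fracSums_bound _ _ _ hw
      refine ⟨⟨(1 / 2) ^ (i + 1) + w, ⟨i + 1, by omega, w, hw, rfl⟩, by rw [add_assoc]⟩, ?_, ?_⟩
      · apply neg_lt_neg
        apply Real.logb_lt_logb (by norm_num) (by positivity)
        rw [pow_succ] at *
        linarith
      · apply neg_le_neg
        exact Real.logb_le_logb_of_le (by norm_num) (by positivity) (by linarith)

lemma omega_step_lt {m a b : ℕ} {x y : Ordinal.{0}} (hx : x < Ordinal.omega0 ^ (m : Ordinal.{0}))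
    (hab : a < b) :
    Ordinal.omega0 ^ (m : Ordinal.{0}) * (a : Ordinal.{0}) + x <
      Ordinal.omega0 ^ (m : Ordinal.{0}) * (b : Ordinal.{0}) + y := by
  calc Ordinal.omega0 ^ (m : Ordinal.{0}) * (a : Ordinal.{0}) + x
      < Ordinal.omega0 ^ (m : Ordinal.{0}) * (a : Ordinal.{0}) +
        Ordinal.omega0 ^ (m : Ordinal.{0}) := by gcongr
    _ = Ordinal.omega0 ^ (m : Ordinal.{0}) * ((a + 1 : ℕ) : Ordinal.{0}) := by
        rw [Nat.cast_succ, mul_add, mul_one]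
    _ ≤ Ordinal.omega0 ^ (m : Ordinal.{0}) * (b : Ordinal.{0}) := by
        gcongr
        exact_mod_cast hab
    _ ≤ _ := le_self_add

lemma omega_mul_nat_lt.{u} (m k : ℕ) :
    Ordinal.omega0 ^ (m : Ordinal.{u}) * (k : Ordinal.{u}) <
      Ordinal.omega0 ^ ((m + 1 : ℕ) : Ordinal.{u}) := by
  rw [Nat.cast_succ, Ordinal.opow_add, Ordinal.opow_one]
  exact mul_lt_mul_of_pos_left (Ordinal.natCast_lt_omega0 k)
    (Ordinal.opow_pos _ Ordinal.omega0_pos)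

lemma exists_rank_fracSums (m c : ℕ) : ∃ f : ℝ → Ordinal.{0},
    (∀ w ∈ fracSums m c, f w < Ordinal.omega0 ^ (m : Ordinal.{0})) ∧
    ∀ w ∈ fracSums m c, ∀ w' ∈ fracSums m c, w < w' → f w' < f w := by
  induction m generalizing c with
  | zero =>
    refine ⟨fun _ => 0, fun _ _ => by simp, ?_⟩
    intro w hw w' hw' h
    have h1 : w = 0 := hw
    have h2 : w' = 0 := hw'
    exact absurd h (by rw [h1, h2]; exact lt_irrefl _)
  | succ m ih =>
    choose f hf1 hf2 using ih
    have hb : ∀ w : ℝ, ∃ b : ℕ, w ∈ fracSums (m + 1) c →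
        c < b ∧ w - (1 / 2) ^ b ∈ fracSums m b := by
      intro w
      by_cases hw : w ∈ fracSums (m + 1) c
      · obtain ⟨b, hcb, w', hw', rfl⟩ := hw
        exact ⟨b, fun _ => ⟨hcb, by simpa using hw'⟩⟩
      · exact ⟨0, fun h => absurd h hw⟩
    choose b hb using hb
    refine ⟨fun w => Ordinal.omega0 ^ (m : Ordinal.{0}) * (b w : Ordinal.{0}) +
      f (b w) (w - (1 / 2) ^ b w), ?_, ?_⟩
    · intro w hw
      have h1 := hf1 _ _ (hb w hw).2
      refine lt_trans ?_ (omega_mul_nat_lt m (b w + 1))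
      simpa using omega_step_lt (y := 0) h1 (Nat.lt_succ_self (b w))
    · intro w hw w' hw' hlt
      obtain ⟨h1, h2⟩ := hb w hw
      obtain ⟨h1', h2'⟩ := hb w' hw'
      rcases lt_trichotomy (b w') (b w) with h | h | h
      · exact omega_step_lt (hf1 _ _ h2') h
      · dsimp only
        rw [h] at h2' ⊢
        have := hf2 _ _ h2 _ h2' (by linarith)
        gcongr
      · exfalso
        have h3 := fracSums_bound _ _ _ h2
        have h4 := fracSums_bound _ _ _ h2'
        have h5 : (1 / 2 : ℝ) ^ (b w') ≤ (1 / 2 : ℝ) ^ (b w + 1) :=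
          pow_le_pow_of_le_one (by norm_num) (by norm_num) h
        rw [pow_succ] at h5
        linarith [h3.1, h4.2]

lemma orderType_main (m : ℕ) (D : Set ℝ)
    (h1 : ∀ d ∈ D, ∃ w ∈ fracSums m 0, ∃ s : ℕ, s < m + 1 ∧ d = -Real.logb 2 (1 + w) + s)
    (h2 : ∀ w ∈ fracSums m 0, ∃ s : ℕ, s < m + 1 ∧ -Real.logb 2 (1 + w) + s ∈ D) :
    D.IsWF ∧ Ordinal.omega0 ^ (m : Ordinal.{0}) ≤ setOrderType D ∧
      setOrderType D ≤ Ordinal.omega0 ^ (m : Ordinal.{0}) * ((m + 1 : ℕ) : Ordinal.{0}) := by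
  have hup : D.IsWF ∧
      setOrderType D ≤ Ordinal.omega0 ^ (m : Ordinal.{0}) * ((m + 1 : ℕ) : Ordinal.{0}) := by
    obtain ⟨f, hf1, hf2⟩ := exists_rank_fracSums m 0
    choose w hw s hs hd using h1
    refine setOrderType_of_map D _ (fun d => Ordinal.omega0 ^ (m : Ordinal.{0}) *
      (s d d.2 : Ordinal.{0}) + f (w d d.2)) ?_ ?_
    · rintro ⟨x, hx⟩ ⟨y, hy⟩ hxy
      have hxy : x < y := hxy
      dsimp only
      have ex := hd x hx
      have ey := hd y hy
      obtain ⟨bx0, bx1⟩ := fracSums_bound _ _ _ (hw x hx)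
      obtain ⟨by0, by1⟩ := fracSums_bound _ _ _ (hw y hy)
      have lx : Real.logb 2 (1 + w x hx) < 1 := by
        rw [Real.logb_lt_iff_lt_rpow (by norm_num) (by positivity)]
        norm_num at *
        linarith
      have ly : 0 ≤ Real.logb 2 (1 + w y hy) :=
        Real.logb_nonneg (by norm_num) (by linarith)
      rcases lt_trichotomy (s x hx) (s y hy) with h | h | h
      · exact omega_step_lt (hf1 _ (hw x hx)) h
      · rw [h]
        have : w y hy < w x hx := by
          by_contra hcon
          have := Real.logb_le_logb_of_le (b := 2) (by norm_num)
            (by positivity : 0 < 1 + w x hx) (by linarith : 1 + w x hx ≤ 1 + w y hy)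
          rw [h] at ex
          linarith
        have := hf2 _ (hw y hy) _ (hw x hx) this
        gcongr
      · exfalso
        have : (s y hy : ℝ) + 1 ≤ s x hx := by exact_mod_cast h
        linarith
    · rintro ⟨x, hx⟩
      simpa using omega_step_lt (y := 0) (hf1 _ (hw x hx)) (hs x hx)
  refine ⟨hup.1, ?_, hup.2⟩
  obtain ⟨s, hs, hb⟩ := (bigSet_log_fracSums m 0 1 one_pos).exists_piece (k := m + 1)
    (P := fun s => {t | t + (s : ℝ) ∈ D}) (by
      rintro t ⟨w, hw, rfl⟩
      exact h2 w hw)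
  exact (hb.translate (s : ℝ)).le_setOrderType hup.1

lemma exists_fracSums_form {m n : ℕ} (hn : 0 < n) (hwt : binaryWeight n = m + 1) :
    ∃ a : ℕ, ∃ w ∈ fracSums m 0, (n : ℝ) = 2 ^ a * (1 + w) := by
  obtain ⟨a, n', rfl, hn'⟩ := exists_two_pow_add hn
  rw [binaryWeight_two_pow_add _ _ hn'] at hwt
  refine ⟨a, _, mem_fracSums_of_lt m 0 a n' hn' (by omega), ?_⟩
  push_cast
  rw [add_zero]
  field_simp

lemma exists_nat_of_fracSums {m : ℕ} {w : ℝ} (hw : w ∈ fracSums m 0) :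
    ∃ a n : ℕ, 0 < n ∧ binaryWeight n = m + 1 ∧ (n : ℝ) = 2 ^ a * (1 + w) := by
  obtain ⟨a, n', hn', hwt, rfl⟩ := exists_of_mem_fracSums m 0 w hw
  refine ⟨a, 2 ^ a + n', by positivity, by rw [binaryWeight_two_pow_add _ _ hn', hwt], ?_⟩
  push_cast
  rw [add_zero]
  field_simp

/-- For `k ≥ 1`, the set `{δ^A(n) : ν₂(n) = k}` is a well-ordered subset of `ℝ` with
order type at least `ω^(k-1)` and at most `ω^(k-1)·k < ω^k`; the same holds for the
set `{δ^A_st(n) : ν₂(n) = k}` of stable defects. -/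
theorem defects_of_fixed_binaryWeight_orderType
    (A : Set (List ℕ)) (hA : Admissible A) (k : ℕ) (hk : 1 ≤ k) :
    ({d : ℝ | ∃ n : ℕ, 0 < n ∧ binaryWeight n = k ∧ d = Adefect A n}.IsWF ∧
      Ordinal.omega0 ^ ((k - 1 : ℕ) : Ordinal) ≤
        setOrderType {d : ℝ | ∃ n : ℕ, 0 < n ∧ binaryWeight n = k ∧ d = Adefect A n} ∧
      setOrderType {d : ℝ | ∃ n : ℕ, 0 < n ∧ binaryWeight n = k ∧ d = Adefect A n} ≤
        Ordinal.omega0 ^ ((k - 1 : ℕ) : Ordinal) * k ∧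
      Ordinal.omega0 ^ ((k - 1 : ℕ) : Ordinal) * k < Ordinal.omega0 ^ (k : Ordinal)) ∧
    ({d : ℝ | ∃ n : ℕ, 0 < n ∧ binaryWeight n = k ∧
        ∃ j : ℕ, AStable A (2 ^ j * n) ∧ d = Adefect A (2 ^ j * n)}.IsWF ∧
      Ordinal.omega0 ^ ((k - 1 : ℕ) : Ordinal) ≤
        setOrderType {d : ℝ | ∃ n : ℕ, 0 < n ∧ binaryWeight n = k ∧
          ∃ j : ℕ, AStable A (2 ^ j * n) ∧ d = Adefect A (2 ^ j * n)} ∧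
      setOrderType {d : ℝ | ∃ n : ℕ, 0 < n ∧ binaryWeight n = k ∧
          ∃ j : ℕ, AStable A (2 ^ j * n) ∧ d = Adefect A (2 ^ j * n)} ≤
        Ordinal.omega0 ^ ((k - 1 : ℕ) : Ordinal) * k) := by
  obtain ⟨m, rfl⟩ : ∃ m, k = m + 1 := ⟨k - 1, by omega⟩
  rw [Nat.add_sub_cancel]
  have hB : ∀ w ∈ fracSums m 0, 0 ≤ w ∧ w < 1 := fun w hw => by
    simpa using fracSums_bound m 0 w hw
  have H1 := orderType_main m
    {d : ℝ | ∃ n : ℕ, 0 < n ∧ binaryWeight n = m + 1 ∧ d = Adefect A n} (by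
      rintro d ⟨n, hn, hwt, rfl⟩
      obtain ⟨a, w, hw, he⟩ := exists_fracSums_form hn hwt
      exact ⟨w, hw, Adefect_form hA hwt (hB w hw).1 (hB w hw).2 he⟩) (by
      intro w hw
      obtain ⟨a, n, hn, hwt, he⟩ := exists_nat_of_fracSums hw
      obtain ⟨s, hs, hd⟩ := Adefect_form hA hwt (hB w hw).1 (hB w hw).2 he
      exact ⟨s, hs, n, hn, hwt, hd.symm⟩)
  have H2 := orderType_main m
    {d : ℝ | ∃ n : ℕ, 0 < n ∧ binaryWeight n = m + 1 ∧
        ∃ j : ℕ, AStable A (2 ^ j * n) ∧ d = Adefect A (2 ^ j * n)} (by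
      rintro d ⟨n, hn, hwt, j, hj, rfl⟩
      rw [← binaryWeight_pow_mul j] at hwt
      obtain ⟨a, w, hw, he⟩ := exists_fracSums_form (by positivity) hwt
      exact ⟨w, hw, Adefect_form hA hwt (hB w hw).1 (hB w hw).2 he⟩) (by
      intro w hw
      obtain ⟨a, n, hn, hwt, he⟩ := exists_nat_of_fracSums hw
      obtain ⟨j, hj⟩ := exists_stable hA hn
      obtain ⟨s, hs, hd⟩ := Adefect_form (N := 2 ^ j * n) (a := j + a) hA
        (by rw [binaryWeight_pow_mul, hwt]) (hB w hw).1 (hB w hw).2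
        (by push_cast; rw [he, pow_add, mul_assoc])
      exact ⟨s, hs, n, hn, hwt, j, hj, hd.symm⟩)
  exact ⟨⟨H1.1, H1.2.1, H1.2.2, omega_mul_nat_lt m (m + 1)⟩, H2⟩
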